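/- In the critical-execution setting (a recoverable wait-free binary consensus algorithm for the n processes, a configuration C, an integer z ≥ 1, and α ∈ 𝓔*_z(C) critical with respect to 𝓔*_z(C)), let O be the object that every process is poised to access in Cα, and suppose there exist v ∈ {0,1}, a process p_i on team v in Cα, and R_i ∈ 𝒮(𝒫 − {p_i}) such that value(O, Cα p_iR_i) = value(O, Cα X), where either X = p_{n−1} and p_{n−1} is on team 1−v in Cα, or X = ⟨⟩. Let p_ℓ be the process with the smallest identifier among p_i and the processes taking steps in R_i. Then for every k ∈ {ℓ+1, …, n−1} and every execution α′ ∈ 𝓔*_z(CαXλ_k) that contains no events by p_0, …, p_{k−1} and is critical with respect to 𝓔*_z(CαXλ_k), the configuration CαXλ_kα′ is either n-recording or v-hiding, where these notions are taken with respect to the critical execution α′, the execution set 𝓔*_z(CαXλ_k), and the common object that all processes are poised to access in CαXλ_kα′. -/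

import Mathlib

/-!
Write `D = CαXλ_k` and let `q = p_{n-1}`.  The configurations `Cα p_i R_i λ_k` and `D` have the same
object values (only `O` was accessed, and its values coincide by hypothesis) and the processes
`p_k, …, p_{n-1}` are all in their initial states, so these processes cannot tell the two apart
(`Sim`), not even after `α'`.  In `Cα p_i R_i λ_k` the execution is `v`-univalent, and since `p_ℓ`
with `ℓ < k` has taken a step after `α`, the process `q` still has an unused crash there even after
`λ_kα'`, because `z·n ≥ 2`.

First, `q` is on team `v` in `Dα'`, since its solo run decides as in `Cα p_i R_i λ_kα'`.  Hence every
`p_b` on team `1-v` has `b < n-1`, and its step entitles `q` to a crash.  Whenever two executions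
that both permit a crash of `q` reach the same object values, crashing `q` and running it alone gives
the same decision after both (`exists_common_decision`).  Consequently:

* `value(O', Dα') ∉ U_{1-v}`: compare `Cα p_i R_i λ_kα'` with `Dα' p_b τ`.
* `U_v ∩ U_{1-v} = ∅`: compare `Dα' p_a σ` with `Dα' p_b τ` if some process other than `q` takes a
  step in `p_a σ`; otherwise `p_a σ = q`, and one compares `Cα p_i R_i λ_kα' q` with `Dα' p_b τ`.

So `Dα'` is `v`-hiding if `value(O', Dα') ∈ U_v`, and vacuously `n`-recording otherwise.
-/

namespace RecoverableConsensus

/-- A deterministic object type: a set of values, operations and responses together with a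
transition function assigning to each (value, operation) pair a unique response and a unique
resulting value. -/
structure DetType : Type 1 where
  Value : Type
  Op : Type
  Resp : Type
  δ : Value → Op → Resp × Value

/-- A type is readable if it has a Read operation that returns (an injective encoding of)
the current value of the object without changing it. -/
def Readable (T : DetType) : Prop :=
  ∃ (read : T.Op) (ι : T.Value → T.Resp),
    Function.Injective ι ∧ ∀ v, T.δ v read = (ι v, v)

/-- The register type over the value set `V`: the operation `none` is Read (returning the
current value without changing it) and `some v` is Write(v) (changing the value to `v`). -/
def RegisterType (V : Type) : DetType where
  Value := V
  Op := Option V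
  Resp := V
  δ := fun u op =>
    match op with
    | none => (u, u)
    | some v => (v, v)

def IsRegister (T : DetType) : Prop := ∃ V : Type, T = RegisterType V

/-- An event is either a step by a process or a crash of a process. -/
inductive Event (n : ℕ) : Type where
  | step : Fin n → Event n
  | crash : Fin n → Event n
deriving DecidableEq

/-- An algorithm for `n` processes: a collection of shared objects, each with a deterministic
type and an initial value, and for each process a deterministic state machine with an initial
state depending on the process's binary input.  Each state determines the process's next step
(`pending`: an operation applied to a designated object, or `none` for a no-op); the state
reached after a step is determined by the current state and the response received (`next`).
`output i s = some v` means that `s` is an output state of process `i` for the value `v`;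
processes in output states take only no-op steps. -/
structure Algorithm (n : ℕ) : Type 1 where
  ObjIdx : Type
  objType : ObjIdx → DetType
  objInit : (o : ObjIdx) → (objType o).Value
  PState : Fin n → Type
  init : (i : Fin n) → Bool → PState i
  pending : (i : Fin n) → PState i → Option ((o : ObjIdx) × (objType o).Op)
  next : (i : Fin n) → PState i → (o : ObjIdx) → (objType o).Resp → PState i
  output : (i : Fin n) → PState i → Option Bool
  output_noop : ∀ i s, output i s ≠ none → pending i s = none

/-- A configuration assigns a state to each process and a value to each object. -/
structure Config {n : ℕ} (A : Algorithm n) : Type where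
  pstate : (i : Fin n) → A.PState i
  oval : (o : A.ObjIdx) → (A.objType o).Value

variable {n : ℕ}

/-- The effect of one event on a configuration.  A crash of `p_i` resets `p_i` to its initial
state (for its input) and leaves all object values unchanged; a step of `p_i` applies its
pending operation (if any) to the designated object, receiving the response determined by the
type's transition function. -/
noncomputable def applyEvent (A : Algorithm n) (input : Fin n → Bool) (C : Config A) :
    Event n → Config A
  | .crash i => { C with pstate := Function.update C.pstate i (A.init i (input i)) }
  | .step i =>
    letI : DecidableEq A.ObjIdx := Classical.decEq _
    match A.pending i (C.pstate i) with
    | none => C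
    | some ⟨o, op⟩ =>
      { pstate := Function.update C.pstate i
          (A.next i (C.pstate i) o ((A.objType o).δ (C.oval o) op).1),
        oval := Function.update C.oval o ((A.objType o).δ (C.oval o) op).2 }

/-- Since the algorithm is deterministic, a finite execution from `C` is determined by its
schedule, i.e. its list of events; `run A input C σ` is the configuration `Cσ` reached by
applying the events of `σ` in order from `C`. -/
noncomputable def run (A : Algorithm n) (input : Fin n → Bool) (C : Config A) :
    List (Event n) → Config A
  | [] => C
  | e :: σ => run A input (applyEvent A input C e) σ

/-- The initial configuration: every process in its initial state, every object at its
initial value. -/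
def initConfig (A : Algorithm n) (input : Fin n → Bool) : Config A :=
  ⟨fun i => A.init i (input i), A.objInit⟩

/-- Process `i` has decided `v` in `Cσ`: at some point along the execution `σ` from `C`,
process `i` was in an output state for `v`. -/
def HasDecided (A : Algorithm n) (input : Fin n → Bool) (C : Config A)
    (σ : List (Event n)) (i : Fin n) (v : Bool) : Prop :=
  ∃ τ, τ <+: σ ∧ A.output i ((run A input C τ).pstate i) = some v

def CrashFree (σ : List (Event n)) : Prop := ∀ i : Fin n, Event.crash i ∉ σ

/-- The first `k` events of an infinite execution. -/
def initSeg (e : ℕ → Event n) (k : ℕ) : List (Event n) := (List.range k).map e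

/-- Agreement: in every execution no two processes decide different values. -/
def Agreement (A : Algorithm n) : Prop :=
  ∀ (input : Fin n → Bool) (σ : List (Event n)) (i j : Fin n) (v w : Bool),
    HasDecided A input (initConfig A input) σ i v →
    HasDecided A input (initConfig A input) σ j w → v = w

/-- Validity: every decided value is the input of some process. -/
def Validity (A : Algorithm n) : Prop :=
  ∀ (input : Fin n → Bool) (σ : List (Event n)) (i : Fin n) (v : Bool),
    HasDecided A input (initConfig A input) σ i v → ∃ j, input j = v

/-- Recoverable wait-freedom: every process, starting from its initial state, either crashes
or decides within a finite number of its own steps.  Equivalently: in every infinite execution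
in which process `i` starts at (or is reset by a crash to) its initial state, takes infinitely
many steps and crashes only finitely often, it eventually reaches an output state. -/
def RecWaitFree (A : Algorithm n) : Prop :=
  ∀ (input : Fin n → Bool) (C : Config A) (e : ℕ → Event n) (i : Fin n),
    (C.pstate i = A.init i (input i) ∨ ∃ k, e k = Event.crash i) →
    (∀ m, ∃ k, m ≤ k ∧ e k = Event.step i) →
    (∃ m, ∀ k, m ≤ k → e k ≠ Event.crash i) →
    ∃ (k : ℕ) (v : Bool), A.output i ((run A input C (initSeg e k)).pstate i) = some v

/-- A recoverable wait-free binary consensus algorithm. -/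
def SolvesRecConsensus (A : Algorithm n) : Prop :=
  Agreement A ∧ Validity A ∧ RecWaitFree A

/-- Agreement restricted to crash-free executions. -/
def AgreementCF (A : Algorithm n) : Prop :=
  ∀ (input : Fin n → Bool) (σ : List (Event n)), CrashFree σ →
    ∀ (i j : Fin n) (v w : Bool),
      HasDecided A input (initConfig A input) σ i v →
      HasDecided A input (initConfig A input) σ j w → v = w

/-- Validity restricted to crash-free executions. -/
def ValidityCF (A : Algorithm n) : Prop :=
  ∀ (input : Fin n → Bool) (σ : List (Event n)), CrashFree σ →
    ∀ (i : Fin n) (v : Bool),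
      HasDecided A input (initConfig A input) σ i v → ∃ j, input j = v

/-- Wait-freedom: in crash-free executions, every process that takes infinitely many steps
decides. -/
def WaitFree (A : Algorithm n) : Prop :=
  ∀ (input : Fin n → Bool) (e : ℕ → Event n),
    (∀ (k : ℕ) (i : Fin n), e k ≠ Event.crash i) →
    ∀ i : Fin n, (∀ m, ∃ k, m ≤ k ∧ e k = Event.step i) →
    ∃ (k : ℕ) (v : Bool),
      A.output i ((run A input (initConfig A input) (initSeg e k)).pstate i) = some v

/-- A wait-free binary consensus algorithm (for the model in which crashes are permanent,
i.e. only crash-free executions are relevant). -/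
def SolvesWFConsensus (A : Algorithm n) : Prop :=
  AgreementCF A ∧ ValidityCF A ∧ WaitFree A

/-- The number of crashes of process `i` in `σ`. -/
def crashCount (i : Fin n) (σ : List (Event n)) : ℕ :=
  (σ.filter fun e => decide (e = Event.crash i)).length

def isStepBelow (i : Fin n) : Event n → Bool
  | .step j => decide (j < i)
  | .crash _ => false

/-- The total number of steps taken by processes `p_0, …, p_{i-1}` in `σ`. -/
def stepsBelow (i : Fin n) (σ : List (Event n)) : ℕ := (σ.filter (isStepBelow i)).length

/-- The crash bound: for every process `p_i`, the number of crashes of `p_i` is at most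
`z·n` times the total number of steps of `p_0, …, p_{i-1}` (for `i = 0` this says that `p_0`
never crashes). -/
def EMem (z : ℕ) (σ : List (Event n)) : Prop :=
  ∀ i : Fin n, crashCount i σ ≤ z * n * stepsBelow i σ

/-- `𝓔_z`: executions satisfying the crash bound. -/
def ESet (n z : ℕ) : Set (List (Event n)) := { σ | EMem z σ }

/-- `𝓔*_z`: executions satisfying the crash bound in every prefix. -/
def EStarSet (n z : ℕ) : Set (List (Event n)) := { σ | ∀ τ, τ <+: σ → EMem z τ }

/-- `e` is an event by a process in `P`. -/
def eventBy (P : Set (Fin n)) : Event n → Prop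
  | .step i => i ∈ P
  | .crash i => i ∈ P

/-- The set of processes `P` is `v`-univalent in the execution `α` from `C` with respect to
the set of executions `𝒜`. -/
def VUnivalentIn (A : Algorithm n) (input : Fin n → Bool) (C : Config A)
    (𝒜 : Set (List (Event n))) (P : Set (Fin n)) (α : List (Event n)) (v : Bool) : Prop :=
  α ∈ 𝒜 ∧ ∀ β : List (Event n), (∀ e ∈ β, eventBy P e) → (α ++ β) ∈ 𝒜 →
    ∀ (i : Fin n) (w : Bool), HasDecided A input C (α ++ β) i w → w = v

/-- The set of processes `P` is bivalent in the execution `α` from `C` with respect to `𝒜`. -/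
def BivalentIn (A : Algorithm n) (input : Fin n → Bool) (C : Config A)
    (𝒜 : Set (List (Event n))) (P : Set (Fin n)) (α : List (Event n)) : Prop :=
  ∀ v : Bool, ∃ β : List (Event n), (∀ e ∈ β, eventBy P e) ∧ (α ++ β) ∈ 𝒜 ∧
    ∃ i : Fin n, HasDecided A input C (α ++ β) i v

/-- `P` is univalent in `α` with respect to `𝒜`: `v`-univalent for some `v`. -/
def UnivalentIn (A : Algorithm n) (input : Fin n → Bool) (C : Config A)
    (𝒜 : Set (List (Event n))) (P : Set (Fin n)) (α : List (Event n)) : Prop :=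
  ∃ v : Bool, VUnivalentIn A input C 𝒜 P α v

/-- `α ∈ 𝒜` is critical with respect to `𝒜`: `α` is bivalent with respect to `𝒜` and every
nonempty extension of `α` inside `𝒜` is univalent with respect to `𝒜`. -/
def Critical (A : Algorithm n) (input : Fin n → Bool) (C : Config A)
    (𝒜 : Set (List (Event n))) (α : List (Event n)) : Prop :=
  α ∈ 𝒜 ∧ BivalentIn A input C 𝒜 Set.univ α ∧
  ∀ β : List (Event n), β ≠ [] → (α ++ β) ∈ 𝒜 → UnivalentIn A input C 𝒜 Set.univ (α ++ β)

/-- Process `i` is on team `v` in `Cα` (with respect to `𝒜`): `α p_i` is `v`-univalent. -/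
def OnTeam (A : Algorithm n) (input : Fin n → Bool) (C : Config A)
    (𝒜 : Set (List (Event n))) (α : List (Event n)) (i : Fin n) (v : Bool) : Prop :=
  VUnivalentIn A input C 𝒜 Set.univ (α ++ [Event.step i]) v

/-- Process `i` is poised to apply an operation to object `O` in configuration `C`. -/
def PoisedAt (A : Algorithm n) (C : Config A) (i : Fin n) (O : A.ObjIdx) : Prop :=
  ∃ op, A.pending i (C.pstate i) = some ⟨O, op⟩

/-- `σ ∈ 𝒮(P)`: a crash-free schedule in which each process of `P` takes at most one step
and no other process takes a step. -/
def IsSched (P : Set (Fin n)) (σ : List (Event n)) : Prop :=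
  ∃ l : List (Fin n), l.Nodup ∧ (∀ j ∈ l, j ∈ P) ∧ σ = l.map Event.step

/-- The schedule `λ_k = c_k c_{k+1} ⋯ c_{n-1}`. -/
def lambdaSched (n k : ℕ) : List (Event n) :=
  ((List.finRange n).filter fun j => decide (k ≤ j.val)).map Event.crash

/-- `U_v`: the set of values of object `O` reachable from `Dα` by a schedule in `𝒮(𝒫)`
whose first process is on team `v`. -/
def USetCfg (A : Algorithm n) (input : Fin n → Bool) (D : Config A)
    (𝒜 : Set (List (Event n))) (α : List (Event n)) (O : A.ObjIdx) (v : Bool) :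
    Set (A.objType O).Value :=
  { w | ∃ (j : Fin n) (σ : List (Event n)), OnTeam A input D 𝒜 α j v ∧
        IsSched {k : Fin n | k ≠ j} σ ∧
        w = (run A input D (α ++ Event.step j :: σ)).oval O }

/-- The configuration `Dα` is `v`-hiding. -/
def VHiding (A : Algorithm n) (input : Fin n → Bool) (D : Config A)
    (𝒜 : Set (List (Event n))) (α : List (Event n)) (O : A.ObjIdx) (v : Bool) : Prop :=
  USetCfg A input D 𝒜 α O false ∩ USetCfg A input D 𝒜 α O true = ∅ ∧
  (run A input D α).oval O ∈ USetCfg A input D 𝒜 α O v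

/-- The configuration `Dα` is `n`-recording. -/
def NRecordingCfg (A : Algorithm n) (input : Fin n → Bool) (D : Config A)
    (𝒜 : Set (List (Event n))) (α : List (Event n)) (O : A.ObjIdx) : Prop :=
  USetCfg A input D 𝒜 α O false ∩ USetCfg A input D 𝒜 α O true = ∅ ∧
  ∀ v : Bool, (run A input D α).oval O ∈ USetCfg A input D 𝒜 α O v →
    ∃! j : Fin n, OnTeam A input D 𝒜 α j (!v)

/-- Apply the operations `o i` of the processes listed in `σ`, in order, to an object of type
`T`, starting from the value `u`. -/
def applyOps (T : DetType) (o : Fin n → T.Op) : T.Value → List (Fin n) → T.Value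
  | u, [] => u
  | u, i :: σ => applyOps T o (T.δ u (o i)).2 σ

/-- `U_x`: the set of values obtainable by applying the operations of the processes of a
duplicate-free schedule whose first process is on team `x` to an object with initial value
`u`. -/
def UVals (T : DetType) (o : Fin n → T.Op) (u : T.Value) (team : Fin n → Bool) (x : Bool) :
    Set T.Value :=
  { v | ∃ (i : Fin n) (σ : List (Fin n)), team i = x ∧ (i :: σ).Nodup ∧
        v = applyOps T o u (i :: σ) }

/-- A deterministic type `T` is `n`-recording. -/
def NRecording (n : ℕ) (T : DetType) : Prop :=
  ∃ (u : T.Value) (team : Fin n → Bool) (o : Fin n → T.Op),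
    (∀ x : Bool, ∃ i, team i = x) ∧
    (UVals T o u team false ∩ UVals T o u team true = ∅) ∧
    (∀ x : Bool, u ∈ UVals T o u team x → ∃! i, team i = !x)

end RecoverableConsensus

namespace RecoverableConsensus

variable {n : ℕ}

/-! ### Runs and indistinguishability -/

lemma run_append (A : Algorithm n) (input : Fin n → Bool) (C : Config A) (σ τ : List (Event n)) :
    run A input C (σ ++ τ) = run A input (run A input C σ) τ := by
  induction σ generalizing C with
  | nil => rfl
  | cons e σ ih => exact ih _

/-- The configurations `C` and `D` are indistinguishable to the processes in `P`: all objects have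
the same values and all processes in `P` have the same states. -/
def Sim {A : Algorithm n} (P : Set (Fin n)) (C D : Config A) : Prop :=
  C.oval = D.oval ∧ ∀ j ∈ P, C.pstate j = D.pstate j

lemma Sim.applyEvent {A : Algorithm n} {input : Fin n → Bool} {P : Set (Fin n)} {C D : Config A}
    (h : Sim P C D) {e : Event n} (he : eventBy P e) :
    Sim P (applyEvent A input C e) (applyEvent A input D e) := by
  obtain ⟨ho, hs⟩ := h
  cases e with
  | crash i =>
    refine ⟨ho, fun j hj => ?_⟩
    by_cases hji : j = i
    · subst hji; simp [RecoverableConsensus.applyEvent]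
    · simp [RecoverableConsensus.applyEvent, hji, hs j hj]
  | step i =>
    have hi : C.pstate i = D.pstate i := hs i he
    unfold RecoverableConsensus.applyEvent
    simp only [hi]
    rcases hp : A.pending i (D.pstate i) with _ | ⟨o, op⟩
    · exact ⟨ho, hs⟩
    · refine ⟨by simp [ho], fun j hj => ?_⟩
      by_cases hji : j = i
      · subst hji; simp [ho]
      · simp [hji, hs j hj]

lemma Sim.run {A : Algorithm n} {input : Fin n → Bool} {P : Set (Fin n)} {C D : Config A}
    (h : Sim P C D) {σ : List (Event n)} (hσ : ∀ e ∈ σ, eventBy P e) :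
    Sim P (run A input C σ) (run A input D σ) := by
  induction σ generalizing C D with
  | nil => exact h
  | cons e σ ih =>
    exact ih (h.applyEvent (hσ e (by simp))) fun e' he' => hσ e' (by simp [he'])

/-- If every process in a duplicate-free list is poised at `O`, then letting each of them take one
step leaves all objects other than `O` unchanged. -/
lemma oval_run_steps {A : Algorithm n} {input : Fin n → Bool} {C : Config A} {O : A.ObjIdx}
    {l : List (Fin n)} (hl : l.Nodup) (hp : ∀ p ∈ l, PoisedAt A C p O) {o : A.ObjIdx}
    (ho : o ≠ O) : (run A input C (l.map Event.step)).oval o = C.oval o := by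
  induction l generalizing C with
  | nil => rfl
  | cons p l ih =>
    obtain ⟨hpl, hl⟩ := List.nodup_cons.1 hl
    obtain ⟨op, hop⟩ := hp p (by simp)
    simp only [List.map_cons, run]
    rw [ih hl]
    · simp [applyEvent, hop, ho]
    · intro q hq
      obtain ⟨op', hop'⟩ := hp q (by simp [hq])
      have hqp : q ≠ p := by rintro rfl; exact hpl hq
      exact ⟨op', by simp [applyEvent, hop, hqp, hop']⟩

lemma oval_run_crashes {A : Algorithm n} {input : Fin n → Bool} {C : Config A}
    (l : List (Fin n)) : (run A input C (l.map Event.crash)).oval = C.oval := by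
  induction l generalizing C with
  | nil => rfl
  | cons p l ih => simp only [List.map_cons, run, ih]; rfl

lemma pstate_run_crashes {A : Algorithm n} {input : Fin n → Bool} {C : Config A}
    {l : List (Fin n)} {j : Fin n} (h : j ∈ l ∨ C.pstate j = A.init j (input j)) :
    (run A input C (l.map Event.crash)).pstate j = A.init j (input j) := by
  induction l generalizing C with
  | nil => simpa [run] using h
  | cons p l ih =>
    simp only [List.map_cons, run]
    apply ih
    by_cases hjp : j = p
    · subst hjp; right; simp [applyEvent]
    · rcases h with h | h
      · left; simpa [hjp] using h
      · right; simpa [applyEvent, hjp] using h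

/-! ### Crash bounds -/

lemma crashCount_append (i : Fin n) (σ τ : List (Event n)) :
    crashCount i (σ ++ τ) = crashCount i σ + crashCount i τ := by
  simp [crashCount]

lemma stepsBelow_append (i : Fin n) (σ τ : List (Event n)) :
    stepsBelow i (σ ++ τ) = stepsBelow i σ + stepsBelow i τ := by
  simp [stepsBelow]

lemma crashCount_steps (i : Fin n) (l : List (Fin n)) :
    crashCount i (l.map Event.step) = 0 := by
  simp [crashCount]

lemma crashCount_crashes_le {l : List (Fin n)} (hl : l.Nodup) (i : Fin n) :
    crashCount i (l.map Event.crash) ≤ 1 := by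
  have h : crashCount i (l.map Event.crash) = l.count i := by
    simp only [crashCount, List.filter_map, List.length_map, List.count, List.countP_eq_length_filter]
    congr 2
    funext j
    simp [Function.comp, beq_eq_decide]
  rw [h]
  exact List.nodup_iff_count_le_one.1 hl i

lemma one_le_stepsBelow {i j : Fin n} (hij : j < i) {σ : List (Event n)}
    (h : Event.step j ∈ σ) : 1 ≤ stepsBelow i σ := by
  have : Event.step j ∈ σ.filter (isStepBelow i) := by simp [h, isStepBelow, hij]
  exact List.length_pos_of_mem this

lemma EMem.append {z : ℕ} {σ τ : List (Event n)} (hσ : EMem z σ) (hτ : EMem z τ) :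
    EMem z (σ ++ τ) := by
  intro i
  rw [crashCount_append, stepsBelow_append, mul_add]
  exact add_le_add (hσ i) (hτ i)

lemma EStarSet_append {z : ℕ} {σ τ : List (Event n)} (hσ : σ ∈ EStarSet n z)
    (hτ : τ ∈ EStarSet n z) : σ ++ τ ∈ EStarSet n z := by
  intro ρ hρ
  obtain ⟨t, ht⟩ := hρ
  rcases List.append_eq_append_iff.1 ht with ⟨s, rfl, -⟩ | ⟨s, rfl, rfl⟩
  · exact hσ ρ (List.prefix_append _ _)
  · exact (hσ σ (List.prefix_refl _)).append (hτ s (List.prefix_append _ _))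

lemma EStarSet_steps (z : ℕ) (l : List (Fin n)) : l.map Event.step ∈ EStarSet n z := by
  intro τ hτ i
  obtain ⟨l', -, rfl⟩ := List.prefix_map_iff.1 hτ
  simp [crashCount_steps]

lemma EStarSet_crash {z : ℕ} {σ : List (Event n)} {j : Fin n} (hσ : σ ∈ EStarSet n z)
    (hj : crashCount j σ + 1 ≤ z * n * stepsBelow j σ) :
    σ ++ [Event.crash j] ∈ EStarSet n z := by
  intro ρ hρ
  rcases List.prefix_concat_iff.1 hρ with rfl | h
  · intro i
    have := hσ σ (List.prefix_refl _) i
    rw [crashCount_append, stepsBelow_append]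
    by_cases hij : j = i
    · subst hij; simpa [crashCount, stepsBelow, isStepBelow] using hj
    · simpa [crashCount, stepsBelow, isStepBelow, hij] using this
  · exact hσ ρ h

lemma EStarSet_crashes {z : ℕ} {σ : List (Event n)} {l : List (Fin n)} (hl : l.Nodup)
    (hσ : σ ∈ EStarSet n z)
    (hj : ∀ j ∈ l, crashCount j σ + 1 ≤ z * n * stepsBelow j σ) :
    σ ++ l.map Event.crash ∈ EStarSet n z := by
  induction l generalizing σ with
  | nil => simpa using hσ
  | cons p l ih =>
    obtain ⟨hpl, hl⟩ := List.nodup_cons.1 hl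
    have h1 := EStarSet_crash hσ (hj p (by simp))
    have h2 := ih hl h1 fun j hjl => by
      have hjp : p ≠ j := by rintro rfl; exact hpl hjl
      have := hj j (by simp [hjl])
      rw [crashCount_append, stepsBelow_append]
      simpa [crashCount, stepsBelow, isStepBelow, hjp] using this
    simpa using h2

/-! ### Solo runs -/

/-- Along any schedule, a process that starts in its initial state decides if it is then run alone
for long enough. -/
lemma exists_solo_decision {A : Algorithm n} (hA : RecWaitFree A) (input : Fin n → Bool)
    (C : Config A) (q : Fin n) (hC : C.pstate q = A.init q (input q)) (σ : List (Event n)) :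
    ∃ (m : ℕ) (τ : List (Event n)) (w : Bool),
      τ <+: σ ++ List.replicate (m + 1) (Event.step q) ∧
      A.output q ((run A input C τ).pstate q) = some w := by
  let e : ℕ → Event n := fun t => σ.getD t (Event.step q)
  have he : ∀ t, σ.length ≤ t → e t = Event.step q := fun t ht => by
    simp [e, List.getD, List.getElem?_eq_none ht]
  obtain ⟨t, w, hw⟩ := hA input C e q (Or.inl hC)
    (fun m => ⟨max m σ.length, le_max_left _ _, he _ (le_max_right _ _)⟩)
    ⟨σ.length, fun t ht => by rw [he t ht]; simp⟩
  refine ⟨t, initSeg e t, w, ?_, hw⟩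
  rw [List.prefix_iff_eq_take]
  apply List.ext_getElem
  · simp [initSeg]; omega
  · intro s h1 h2
    simp only [initSeg, List.getElem_map, List.getElem_range, List.getElem_take, e]
    by_cases hs : s < σ.length
    · simp [List.getD, hs]
    · simp [List.getD, hs, List.getElem_append_right (not_lt.1 hs)]

/-- If two executions (possibly from different configurations) reach the same object values and both
permit a crash of `q`, then crashing `q` and running it alone extends both to executions of `𝓔*_z`
in which `q` decides the same value. -/
lemma exists_common_decision {A : Algorithm n} (hA : RecWaitFree A) (input : Fin n → Bool)
    {z : ℕ} {C₁ C₂ : Config A} {ρ₁ ρ₂ : List (Event n)} {q : Fin n}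
    (h₁ : ρ₁ ++ [Event.crash q] ∈ EStarSet n z) (h₂ : ρ₂ ++ [Event.crash q] ∈ EStarSet n z)
    (ho : (run A input C₁ ρ₁).oval = (run A input C₂ ρ₂).oval) :
    ∃ (σ : List (Event n)) (w : Bool), ρ₁ ++ σ ∈ EStarSet n z ∧ ρ₂ ++ σ ∈ EStarSet n z ∧
      HasDecided A input C₁ (ρ₁ ++ σ) q w ∧ HasDecided A input C₂ (ρ₂ ++ σ) q w := by
  set D₁ := run A input C₁ (ρ₁ ++ [Event.crash q]) with hD₁
  set D₂ := run A input C₂ (ρ₂ ++ [Event.crash q]) with hD₂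
  have hs₁ : D₁.pstate q = A.init q (input q) := by
    rw [hD₁, run_append]; simp [run, applyEvent]
  have hs₂ : D₂.pstate q = A.init q (input q) := by
    rw [hD₂, run_append]; simp [run, applyEvent]
  have hsim : Sim {q} D₁ D₂ := by
    refine ⟨?_, ?_⟩
    · rw [hD₁, hD₂, run_append, run_append]; simpa [run, applyEvent] using ho
    · rintro j rfl; rw [hs₁, hs₂]
  obtain ⟨m, τ, w, hτ, hw⟩ := exists_solo_decision hA input D₁ q hs₁ []
  rw [List.nil_append] at hτ
  have hrep : List.replicate (m + 1) (Event.step q) =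
      (List.replicate (m + 1) q).map Event.step := by simp
  have hw₂ : A.output q ((run A input D₂ τ).pstate q) = some w := by
    rw [← hw, (hsim.run (σ := τ) fun e he => ?_).2 q rfl]
    rw [List.eq_of_mem_replicate (hτ.subset he)]
    rfl
  refine ⟨Event.crash q :: List.replicate (m + 1) (Event.step q), w, ?_, ?_, ?_, ?_⟩
  · rw [hrep]; simpa using EStarSet_append h₁ (EStarSet_steps z (List.replicate (m + 1) q))
  · rw [hrep]; simpa using EStarSet_append h₂ (EStarSet_steps z (List.replicate (m + 1) q))
  · refine ⟨(ρ₁ ++ [Event.crash q]) ++ τ, ?_, by rw [run_append]; exact hw⟩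
    simpa using hτ
  · refine ⟨(ρ₂ ++ [Event.crash q]) ++ τ, ?_, by rw [run_append]; exact hw₂⟩
    simpa using hτ

/-- If `γ₁` is `v₁`-univalent, `γ₂` is `v₂`-univalent, and some extensions of them permit a crash of
`q` and reach the same object values, then `v₁ = v₂`. -/
lemma valency_eq_of_oval_eq {A : Algorithm n} (hA : RecWaitFree A) {input : Fin n → Bool}
    {z : ℕ} {C₁ C₂ : Config A} {γ₁ γ₂ ρ₁ ρ₂ : List (Event n)} {q : Fin n} {v₁ v₂ : Bool}
    (hv₁ : VUnivalentIn A input C₁ (EStarSet n z) Set.univ γ₁ v₁)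
    (hv₂ : VUnivalentIn A input C₂ (EStarSet n z) Set.univ γ₂ v₂)
    (h₁ : (γ₁ ++ ρ₁) ++ [Event.crash q] ∈ EStarSet n z)
    (h₂ : (γ₂ ++ ρ₂) ++ [Event.crash q] ∈ EStarSet n z)
    (ho : (run A input C₁ (γ₁ ++ ρ₁)).oval = (run A input C₂ (γ₂ ++ ρ₂)).oval) : v₁ = v₂ := by
  obtain ⟨σ, w, m₁, m₂, d₁, d₂⟩ := exists_common_decision hA input h₁ h₂ ho
  rw [List.append_assoc] at m₁ m₂ d₁ d₂
  have huniv : ∀ e : Event n, eventBy Set.univ e := fun e => by cases e <;> trivial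
  rw [← hv₁.2 _ (fun e _ => huniv e) m₁ q w d₁, ← hv₂.2 _ (fun e _ => huniv e) m₂ q w d₂]

end RecoverableConsensus

open RecoverableConsensus in
/-- In the critical-execution setting, with `O` the object that every
process is poised to access in `Cα`, suppose `p_i` is on team `v`, `R_i ∈ 𝒮(𝒫 - {p_i})`, and
`value(O, Cα p_i R_i) = value(O, Cα X)` where either `X = p_{n-1}` and `p_{n-1}` is on team
`¬v`, or `X = ⟨⟩`.  Let `p_ℓ` be the process with the smallest identifier among `p_i` and the
processes taking steps in `R_i`.  Then for every `k ∈ {ℓ+1, …, n-1}` and every execution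
`α' ∈ 𝓔*_z(CαXλ_k)` containing no events by `p_0, …, p_{k-1}` that is critical with respect
to `𝓔*_z(CαXλ_k)`, the configuration `CαXλ_kα'` is either `n`-recording or `v`-hiding (with
respect to `α'`, the execution set `𝓔*_z(CαXλ_k)`, and the common object `O'` that all
processes are poised to access in `CαXλ_kα'`). -/
theorem main_technical_lemma
    (n : ℕ) (hn : 2 ≤ n) (A : Algorithm n) (hA : SolvesRecConsensus A)
    (input : Fin n → Bool) (C : Config A) (z : ℕ) (hz : 1 ≤ z)
    (α : List (Event n)) (hα : α ∈ EStarSet n z)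
    (hcrit : Critical A input C (EStarSet n z) α)
    (O : A.ObjIdx) (hO : ∀ p : Fin n, PoisedAt A (run A input C α) p O)
    (v : Bool) (i : Fin n)
    (hi : OnTeam A input C (EStarSet n z) α i v)
    (Ri : List (Event n)) (hRi : IsSched {k : Fin n | k ≠ i} Ri)
    (X : List (Event n))
    (hX : (X = [Event.step (⟨n - 1, by omega⟩ : Fin n)] ∧
            OnTeam A input C (EStarSet n z) α ⟨n - 1, by omega⟩ (!v)) ∨ X = [])
    (hval : (run A input C (α ++ Event.step i :: Ri)).oval O =
            (run A input C (α ++ X)).oval O)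
    (ℓ : Fin n)
    (hℓmem : ℓ = i ∨ Event.step ℓ ∈ Ri)
    (hℓmin : ∀ j : Fin n, (j = i ∨ Event.step j ∈ Ri) → ℓ ≤ j)
    (k : ℕ) (hk1 : ℓ.val + 1 ≤ k) (hk2 : k ≤ n - 1)
    (α' : List (Event n)) (hα' : α' ∈ EStarSet n z)
    (hnolow : ∀ e ∈ α', ∀ j : Fin n, j.val < k → e ≠ Event.step j ∧ e ≠ Event.crash j)
    (hcrit' : Critical A input (run A input C (α ++ X ++ lambdaSched n k))
                (EStarSet n z) α')
    (O' : A.ObjIdx)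
    (hO' : ∀ p : Fin n,
      PoisedAt A (run A input (run A input C (α ++ X ++ lambdaSched n k)) α') p O') :
    NRecordingCfg A input (run A input C (α ++ X ++ lambdaSched n k)) (EStarSet n z) α' O' ∨
    VHiding A input (run A input C (α ++ X ++ lambdaSched n k)) (EStarSet n z) α' O' v := by
  have hW : RecWaitFree A := hA.2.2
  have huniv : ∀ e : Event n, eventBy Set.univ e := fun e => by cases e <;> trivial
  set q : Fin n := ⟨n - 1, by omega⟩ with hq
  set D := run A input C (α ++ X ++ lambdaSched n k) with hD
  set L : List (Fin n) := (List.finRange n).filter fun j => decide (k ≤ j.val) with hL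
  have hlam : lambdaSched n k = L.map Event.crash := rfl
  have hLnd : L.Nodup := (List.nodup_finRange n).filter _
  have hLmem : ∀ j : Fin n, j ∈ L ↔ k ≤ j.val := by simp [hL]
  obtain ⟨l, hlnd, hli, rfl⟩ := hRi
  have hilnd : (i :: l).Nodup :=
    List.nodup_cons.2 ⟨fun h => hli i h rfl, hlnd⟩
  have hℓin : Event.step ℓ ∈ (i :: l).map Event.step := by
    rcases hℓmem with h | h
    · simp [h]
    · simp only [List.map_cons, List.mem_cons]; exact Or.inr h
  have hzn : 2 ≤ z * n := le_trans hn (Nat.le_mul_of_pos_left n hz)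
  -- `B = Cα p_i R_i λ_k`, the `v`-univalent counterpart of `D`.
  set β := α ++ (i :: l).map Event.step ++ L.map Event.crash with hβ
  set B := run A input C β with hB
  have hsim : Sim {j : Fin n | k ≤ j.val} B D := by
    refine ⟨?_, fun j hj => ?_⟩
    · have hov : (run A input C (α ++ (i :: l).map Event.step)).oval =
          (run A input C (α ++ X)).oval := by
        funext o
        by_cases ho : o = O
        · subst ho; exact hval
        · rw [run_append, run_append, oval_run_steps hilnd (fun p _ => hO p) ho]
          rcases hX with ⟨rfl, -⟩ | rfl
          · exact (oval_run_steps (l := [q]) (by simp) (fun p _ => hO p) ho).symm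
          · rfl
      rw [hB, hD, hβ, hlam, run_append, run_append A input C (α ++ X), oval_run_crashes,
        oval_run_crashes, hov]
    · have hjL : j ∈ L := (hLmem j).2 hj
      rw [hB, hD, hβ, hlam, run_append, run_append A input C (α ++ X),
        pstate_run_crashes (Or.inl hjL), pstate_run_crashes (Or.inl hjL)]
  have hqk : k ≤ q.val := hk2
  have hDq : D.pstate q = A.init q (input q) := by
    rw [hD, hlam, run_append, pstate_run_crashes (Or.inl ((hLmem q).2 hqk))]
  have hα'by : ∀ e ∈ α', eventBy {j : Fin n | k ≤ j.val} e := by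
    intro e he
    cases e with
    | step j =>
      by_contra h
      exact (hnolow _ he j (not_le.1 h)).1 rfl
    | crash j =>
      by_contra h
      exact (hnolow _ he j (not_le.1 h)).2 rfl
  have hβmem : β ∈ EStarSet n z := by
    refine EStarSet_crashes hLnd (EStarSet_append hα (EStarSet_steps z _)) fun j hj => ?_
    have hℓj : ℓ < j := by
      have := (hLmem j).1 hj
      exact Fin.lt_def.2 (by omega)
    have h1 := hα α (List.prefix_refl _) j
    have h2 := one_le_stepsBelow hℓj hℓin
    rw [crashCount_append, stepsBelow_append, crashCount_steps]
    nlinarith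
  -- The step of `p_ℓ` pays for the crash of `q` in `λ_k` and for one more.
  have hβcrash : ∀ s : List (Fin n),
      (β ++ (α' ++ s.map Event.step)) ++ [Event.crash q] ∈ EStarSet n z := by
    intro s
    refine EStarSet_crash
      (EStarSet_append hβmem (EStarSet_append hα' (EStarSet_steps z s))) ?_
    have hℓq : ℓ < q := Fin.lt_def.2 (by omega)
    have h1 := hα α (List.prefix_refl _) q
    have h2 := one_le_stepsBelow hℓq hℓin
    have h3 := hα' α' (List.prefix_refl _) q
    have h4 := crashCount_crashes_le hLnd q
    simp only [hβ, crashCount_append, stepsBelow_append, crashCount_steps]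
    have h5 : z * n * 1 ≤ z * n * stepsBelow q ((i :: l).map Event.step) :=
      Nat.mul_le_mul_left _ h2
    simp only [mul_add]
    omega
  have hβsplit : ∀ ρ : List (Event n), β ++ ρ =
      (α ++ [Event.step i]) ++ (l.map Event.step ++ L.map Event.crash ++ ρ) := by
    intro ρ; simp [hβ]
  -- `q` is not on team `1-v`, as its solo run after `α'` is the same from `B` and from `D`.
  have hqteam : ¬ OnTeam A input D (EStarSet n z) α' q (!v) := by
    intro hteam
    obtain ⟨m, τ, w, hτ, hw⟩ := exists_solo_decision hW input D q hDq α'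
    have hrep : List.replicate (m + 1) (Event.step q) =
        (List.replicate (m + 1) q).map Event.step := by simp
    have hsolo : List.replicate (m + 1) (Event.step q) ∈ EStarSet n z := by
      rw [hrep]; exact EStarSet_steps z _
    have hwB : A.output q ((run A input B τ).pstate q) = some w := by
      rw [← hw, (hsim.run (σ := τ) fun e he => ?_).2 q hqk]
      rcases List.mem_append.1 (hτ.subset he) with h | h
      · exact hα'by e h
      · rw [List.eq_of_mem_replicate h]; exact hqk
    have e1 : w = !v := by
      refine hteam.2 (List.replicate m (Event.step q)) (fun e _ => huniv e) ?_ q w ⟨τ, ?_, hw⟩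
      · simpa [List.replicate_succ] using EStarSet_append hα' hsolo
      · simpa [List.replicate_succ] using hτ
    have e2 : w = v := by
      refine hi.2
        (l.map Event.step ++ L.map Event.crash ++ (α' ++ List.replicate (m + 1) (Event.step q)))
        (fun e _ => huniv e) ?_ q w ⟨β ++ τ, ?_, by rw [run_append]; exact hwB⟩
      · rw [← hβsplit]
        exact EStarSet_append hβmem (EStarSet_append hα' hsolo)
      · rw [← hβsplit]
        exact (List.prefix_append_right_inj β).2 hτ
    rw [e2] at e1
    cases v <;> simp at e1
  have hlt : ∀ b : Fin n, b ≠ q → b < q := by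
    intro b hb
    have : b.val ≠ n - 1 := fun h => hb (Fin.ext h)
    exact Fin.lt_def.2 (by have := b.isLt; simp only [hq]; omega)
  -- After `α'`, a step by any process other than `q` pays for a crash of `q`.
  have hDcrash : ∀ (s : List (Fin n)) (b : Fin n), b ∈ s → b ≠ q →
      (α' ++ s.map Event.step) ++ [Event.crash q] ∈ EStarSet n z := by
    intro s b hb hbq
    refine EStarSet_crash (EStarSet_append hα' (EStarSet_steps z s)) ?_
    have h1 := hα' α' (List.prefix_refl _) q
    have h2 : 1 ≤ stepsBelow q (s.map Event.step) :=
      one_le_stepsBelow (hlt b hbq) (List.mem_map_of_mem hb)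
    rw [crashCount_append, stepsBelow_append, crashCount_steps]
    nlinarith
  have hoval : ∀ s t : List (Fin n), s.Nodup → t.Nodup →
      (run A input D (α' ++ s.map Event.step)).oval O' =
        (run A input D (α' ++ t.map Event.step)).oval O' →
      (run A input D (α' ++ s.map Event.step)).oval =
        (run A input D (α' ++ t.map Event.step)).oval := by
    intro s t hs ht h
    funext o
    by_cases ho : o = O'
    · subst ho; exact h
    · rw [run_append, run_append, oval_run_steps hs (fun p _ => hO' p) ho,
        oval_run_steps ht (fun p _ => hO' p) ho]
  have hvne : v ≠ !v := by cases v <;> simp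
  -- At most one step, by `q`, never brings `O'` to a value in `U_{1-v}`: in `B` the execution can be
  -- continued by a crash and a solo run of `q` that decides `v`.
  have hB_D : ∀ (s : List (Fin n)) (b : Fin n) (t : List (Fin n)), (∀ p ∈ s, p = q) →
      s.Nodup → (b :: t).Nodup → OnTeam A input D (EStarSet n z) α' b (!v) →
      (run A input D (α' ++ s.map Event.step)).oval O' ≠
        (run A input D (α' ++ (b :: t).map Event.step)).oval O' := by
    intro s b t hsq hs hbt hb h
    have hbq : b ≠ q := by rintro rfl; exact hqteam hb
    have ho := hoval s (b :: t) hs hbt h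
    have hBD : (run A input B (α' ++ s.map Event.step)).oval =
        (run A input D (α' ++ s.map Event.step)).oval := by
      refine (hsim.run fun e he => ?_).1
      rcases List.mem_append.1 he with h | h
      · exact hα'by e h
      · obtain ⟨p, hp, rfl⟩ := List.mem_map.1 h
        rw [hsq p hp]; exact hqk
    refine hvne (valency_eq_of_oval_eq (z := z) (q := q) hW hi hb
      (ρ₁ := l.map Event.step ++ L.map Event.crash ++ (α' ++ s.map Event.step))
      (ρ₂ := t.map Event.step) ?_ ?_ ?_)
    · rw [← hβsplit]; exact hβcrash s
    · simpa using hDcrash (b :: t) b (by simp) hbq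
    · rw [← hβsplit, run_append, ← hB, hBD, ho]
      simp
  have hself : (run A input D α').oval O' ∉ USetCfg A input D (EStarSet n z) α' O' (!v) := by
    rintro ⟨b, _, hb, ⟨t, htnd, htb, rfl⟩, h⟩
    refine hB_D [] b t (by simp) (by simp) (List.nodup_cons.2 ⟨fun h => htb b h rfl, htnd⟩) hb ?_
    simpa using h
  have hdisj : USetCfg A input D (EStarSet n z) α' O' v ∩
      USetCfg A input D (EStarSet n z) α' O' (!v) = ∅ := by
    rw [Set.eq_empty_iff_forall_notMem]
    rintro u ⟨⟨a, _, ha, ⟨s, hsnd, hsa, rfl⟩, hu⟩, ⟨b, _, hb, ⟨t, htnd, htb, rfl⟩, hu'⟩⟩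
    have hand : (a :: s).Nodup := List.nodup_cons.2 ⟨fun h => hsa a h rfl, hsnd⟩
    have hbnd : (b :: t).Nodup := List.nodup_cons.2 ⟨fun h => htb b h rfl, htnd⟩
    have hbq : b ≠ q := by rintro rfl; exact hqteam hb
    have heq : (run A input D (α' ++ (a :: s).map Event.step)).oval O' =
        (run A input D (α' ++ (b :: t).map Event.step)).oval O' := by
      simp only [List.map_cons]; rw [← hu, ← hu']
    by_cases hall : ∀ p ∈ a :: s, p = q
    · exact hB_D (a :: s) b t hall hand hbnd hb heq
    · push Not at hall
      obtain ⟨p, hp, hpq⟩ := hall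
      refine hvne (valency_eq_of_oval_eq (z := z) (q := q) hW ha hb
        (ρ₁ := s.map Event.step) (ρ₂ := t.map Event.step) ?_ ?_ ?_)
      · simpa using hDcrash (a :: s) p hp hpq
      · simpa using hDcrash (b :: t) b (by simp) hbq
      · simpa using hoval _ _ hand hbnd heq
  have hdisj' : USetCfg A input D (EStarSet n z) α' O' false ∩
      USetCfg A input D (EStarSet n z) α' O' true = ∅ := by
    cases v
    · exact hdisj
    · rw [Set.inter_comm]; exact hdisj
  by_cases hv : (run A input D α').oval O' ∈ USetCfg A input D (EStarSet n z) α' O' v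
  · exact Or.inr ⟨hdisj', hv⟩
  · refine Or.inl ⟨hdisj', fun w hw => ?_⟩
    by_cases hwv : w = v
    · exact absurd (hwv ▸ hw) hv
    · have : w = !v := Bool.eq_not.2 hwv
      exact absurd (this ▸ hw) hself
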